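/- There exists a universal constant C with the following property. Fix λ ≥ 1 and C₀ > 0. Let K : ℝ² × ℝ² → ℝ be a continuously differentiable kernel such that, writing z = (z₁,z₂) ∈ ℝ² × ℝ², one has ∫∫_{ℝ²×ℝ²} |z^a ∂_z^b K(z)| dz ≤ C₀ λ^{|b|−|a|} for all multi-indices a, b with 0 ≤ |a|, |b| ≤ 1. Define the bilinear convolution operator S(f₁,f₂)(x) = ∫∫_{ℝ²×ℝ²} K(x−y₁, x−y₂) f₁(y₁) f₂(y₂) dy₁ dy₂. Let u : ℝ² × ℝ → ℝ² be a smooth vector field, 2π-periodic in space, with div u(·,t) = 0 for all t, let D_t = ∂_t + u·∇, and let f₁, f₂ : ℝ² × ℝ → ℝ be smooth and 2π-periodic in space. Then for every time t: sup_{x∈ℝ²} | D_t S(f₁,f₂)(x,t) − S(D_t f₁, f₂)(x,t) − S(f₁, D_t f₂)(x,t) | ≤ C C₀ ‖∇u(·,t)‖_{C⁰} ‖f₁(·,t)‖_{C⁰} ‖f₂(·,t)‖_{C⁰}; in particular the bound is independent of λ. -/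

import Mathlib

noncomputable section

open Real MeasureTheory
open scoped BigOperators

abbrev E2 : Type := EuclideanSpace ℝ (Fin 2)
abbrev E4 : Type := E2 × E2

/-- The four coordinate directions of `ℝ² × ℝ²`. -/
def dir : Fin 2 ⊕ Fin 2 → E4 :=
  Sum.elim (fun i => (EuclideanSpace.single i 1, 0)) (fun i => (0, EuclideanSpace.single i 1))

/-- The four coordinate functions of `z = (z₁, z₂) ∈ ℝ² × ℝ²`. -/
def coordFn : Fin 2 ⊕ Fin 2 → E4 → ℝ :=
  Sum.elim (fun i z => z.1 i) (fun i z => z.2 i)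

/-!
On `E × E`, let `Φ = f₁ ⊗ f₂`. Then `S(f₁, f₂)` is the restriction of the convolution `K * Φ` to the
diagonal, which is preserved by the flow of `u × u`; this field is again divergence free, with the
same bound on its gradient. It therefore suffices to estimate the commutator of `D_t` with the
*linear* operator `K * ·`. In the variable `z = x - y` that commutator is
`-∫ K(z) ∇G(z)·V(z) dz` with `G(z) = Φ(x - z, t)` and `V(z) = u(x, t) - u(x - z, t)`. Since
`div V = 0`, the divergence theorem moves the derivative onto `K`, and `|V(z)| ≤ ‖∇u‖_{C⁰} |z|`
leaves only the moment `∫ |z| |∇K(z)| dz`, which is invariant under rescaling of `K`; hence no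
dependence on `λ`.
-/

section Commutator

open Filter Asymptotics
open scoped Topology

theorem exists_eventually_forall_norm_le {α X F : Type*} [TopologicalSpace X]
    [SeminormedAddCommGroup F] {g : α × X → F} {t : X}
    (hg : g =O[⊤ ×ˢ 𝓝 t] fun _ => (1 : ℝ)) : ∃ M, ∀ᶠ τ in 𝓝 t, ∀ x, ‖g (x, τ)‖ ≤ M := by
  obtain ⟨M, hM⟩ := (isBigO_one_iff ℝ).1 hg
  rw [eventually_map, top_prod, eventually_comap] at hM
  exact ⟨M, hM.mono fun τ h x => h (x, τ) rfl⟩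

variable {E F : Type*} [NormedAddCommGroup E] [NormedSpace ℝ E]
  [NormedAddCommGroup F] [NormedSpace ℝ F]

theorem fderiv_comp_const_sub (f : E → F) (x y : E) :
    fderiv ℝ (fun z => f (x - z)) y = -fderiv ℝ f (x - y) := by
  have hneg := (ContinuousLinearEquiv.neg ℝ (M := E)).comp_right_fderiv
    (f := fun z => f (x + z)) (x := y)
  simp only [fderiv_comp_add_left] at hneg
  ext v
  simpa [Function.comp_def, sub_eq_add_neg] using congr($hneg v)

/-- `IsSolenoidalWith L v` says that `v` is a `C¹` divergence-free vector field with
`‖∇v‖_{C⁰} ≤ L`; the divergence is encoded as the trace of the derivative. -/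
structure IsSolenoidalWith (L : ℝ) (v : E → E) : Prop where
  contDiff : ContDiff ℝ 1 v
  norm_fderiv_le : ∀ x, ‖fderiv ℝ v x‖ ≤ L
  trace_fderiv : ∀ x, LinearMap.trace ℝ E (fderiv ℝ v x) = 0

namespace IsSolenoidalWith

variable {L : ℝ} {v : E → E}

theorem nonneg (hv : IsSolenoidalWith L v) : 0 ≤ L :=
  (norm_nonneg _).trans (hv.norm_fderiv_le 0)

theorem differentiable (hv : IsSolenoidalWith L v) : Differentiable ℝ v :=
  hv.contDiff.differentiable one_ne_zero

theorem norm_sub_le (hv : IsSolenoidalWith L v) (x y : E) : ‖v x - v y‖ ≤ L * ‖x - y‖ :=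
  convex_univ.norm_image_sub_le_of_norm_fderiv_le (fun z _ => hv.differentiable z)
    (fun z _ => hv.norm_fderiv_le z) (Set.mem_univ y) (Set.mem_univ x)

theorem norm_le_of_zero (hv : IsSolenoidalWith L v) (hv₀ : v 0 = 0) (x : E) :
    ‖v x‖ ≤ L * ‖x‖ := by
  simpa [hv₀] using hv.norm_sub_le x 0

theorem prodMap_self [FiniteDimensional ℝ E] (hv : IsSolenoidalWith L v) :
    IsSolenoidalWith L (Prod.map v v) := by
  have hfderiv (x : E × E) :
      fderiv ℝ (Prod.map v v) x = (fderiv ℝ v x.1).prodMap (fderiv ℝ v x.2) :=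
    ((hv.differentiable x.1).hasFDerivAt.prodMap x (hv.differentiable x.2).hasFDerivAt).fderiv
  refine ⟨hv.contDiff.prodMap hv.contDiff, fun x => ?_, fun x => ?_⟩
  · rw [hfderiv]
    refine ContinuousLinearMap.opNorm_le_bound _ hv.nonneg fun y => ?_
    rw [Prod.norm_def, max_le_iff]
    exact ⟨(fderiv ℝ v x.1).le_of_opNorm_le_of_le (hv.norm_fderiv_le _) (norm_fst_le y),
      (fderiv ℝ v x.2).le_of_opNorm_le_of_le (hv.norm_fderiv_le _) (norm_snd_le y)⟩
  · rw [hfderiv, ContinuousLinearMap.coe_prodMap, LinearMap.trace_prodMap', hv.trace_fderiv,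
      hv.trace_fderiv, add_zero]

theorem const_sub_comp_const_sub (hv : IsSolenoidalWith L v) (x : E) :
    IsSolenoidalWith L (fun z => v x - v (x - z)) := by
  have hfderiv (z : E) : fderiv ℝ (fun z => v x - v (x - z)) z = fderiv ℝ v (x - z) := by
    rw [fderiv_const_sub, fderiv_comp_const_sub, neg_neg]
  refine ⟨contDiff_const.sub (hv.contDiff.comp (contDiff_const.sub contDiff_id)), fun z => ?_,
    fun z => ?_⟩
  · rw [hfderiv]
    exact hv.norm_fderiv_le _
  · rw [hfderiv]
    exact hv.trace_fderiv _

end IsSolenoidalWith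

section MaterialDerivative

/-- The material derivative `D_t f = ∂ₜ f + u·∇f`. -/
def materialDeriv (u : E × ℝ → E) (f : E × ℝ → ℝ) (p : E × ℝ) : ℝ :=
  deriv (fun τ => f (p.1, τ)) p.2 + fderiv ℝ (fun w => f (w, p.2)) p.1 (u p)

theorem fderiv_comp_prodMk_left {f : E × ℝ → F} {x : E} {t : ℝ}
    (hf : DifferentiableAt ℝ f (x, t)) :
    fderiv ℝ (fun w => f (w, t)) x = fderiv ℝ f (x, t) ∘L .inl ℝ E ℝ :=
  (hf.hasFDerivAt.comp x (hasFDerivAt_prodMk_left x t)).fderiv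

theorem materialDeriv_eq_fderiv {u : E × ℝ → E} {f : E × ℝ → ℝ} {p : E × ℝ}
    (hf : DifferentiableAt ℝ f p) : materialDeriv u f p = fderiv ℝ f p (u p, 1) := by
  have htime : HasDerivAt (fun τ => f (p.1, τ)) (fderiv ℝ f p (0, 1)) p.2 :=
    (hf.hasFDerivAt.comp p.2 (hasFDerivAt_prodMk_right p.1 p.2) :
      HasFDerivAt (fun τ => f (p.1, τ)) (fderiv ℝ f p ∘L .inr ℝ E ℝ) p.2).hasDerivAt
  rw [materialDeriv, htime.deriv, fderiv_comp_prodMk_left hf, ContinuousLinearMap.comp_apply,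
    ContinuousLinearMap.inl_apply, ← map_add]
  simp

theorem fderiv_comp_clm_prodMk {G : Type*} [NormedAddCommGroup G] [NormedSpace ℝ G]
    {f : E × ℝ → F} (A : G →L[ℝ] E) {p : G × ℝ} (hf : DifferentiableAt ℝ f (A p.1, p.2)) :
    fderiv ℝ (fun q : G × ℝ => f (A q.1, q.2)) p =
      fderiv ℝ f (A p.1, p.2) ∘L A.prodMap (.id ℝ ℝ) :=
  (hf.hasFDerivAt.comp p (A.prodMap (.id ℝ ℝ)).hasFDerivAt).fderiv

theorem materialDeriv_comp_clm {G : Type*} [NormedAddCommGroup G] [NormedSpace ℝ G]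
    {f : E × ℝ → ℝ} {u : G × ℝ → G} {w : E × ℝ → E} (A : G →L[ℝ] E) {p : G × ℝ}
    (hf : DifferentiableAt ℝ f (A p.1, p.2)) (hA : A (u p) = w (A p.1, p.2)) :
    materialDeriv u (fun q => f (A q.1, q.2)) p = materialDeriv w f (A p.1, p.2) := by
  have hcomp : DifferentiableAt ℝ (fun q : G × ℝ => f (A q.1, q.2)) p :=
    hf.comp p (A.prodMap (.id ℝ ℝ)).differentiableAt
  rw [materialDeriv_eq_fderiv hcomp, materialDeriv_eq_fderiv hf, fderiv_comp_clm_prodMk A hf, ← hA]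
  rfl

theorem materialDeriv_mul {u : E × ℝ → E} {f g : E × ℝ → ℝ} {p : E × ℝ}
    (hf : DifferentiableAt ℝ f p) (hg : DifferentiableAt ℝ g p) :
    materialDeriv u (fun q => f q * g q) p =
      materialDeriv u f p * g p + f p * materialDeriv u g p := by
  rw [materialDeriv_eq_fderiv (hf.fun_mul hg), materialDeriv_eq_fderiv hf,
    materialDeriv_eq_fderiv hg, fderiv_fun_mul hf hg]
  simp only [add_apply, smul_apply, smul_eq_mul]
  ring

/-- `IsBoundedC1Near f t` says that `f` is `C¹` in space-time and that `f` and its derivative are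
bounded on `E × I` for some neighbourhood `I` of the time `t`. -/
structure IsBoundedC1Near (f : E × ℝ → F) (t : ℝ) : Prop where
  contDiff : ContDiff ℝ 1 f
  isBigO_one : f =O[⊤ ×ˢ 𝓝 t] fun _ => (1 : ℝ)
  fderiv_isBigO_one : fderiv ℝ f =O[⊤ ×ˢ 𝓝 t] fun _ => (1 : ℝ)

namespace IsBoundedC1Near

variable {f : E × ℝ → F} {t : ℝ}

theorem differentiable (hf : IsBoundedC1Near f t) : Differentiable ℝ f :=
  hf.contDiff.differentiable one_ne_zero

theorem continuous_fderiv (hf : IsBoundedC1Near f t) : Continuous (fderiv ℝ f) :=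
  hf.contDiff.continuous_fderiv one_ne_zero

theorem exists_norm_le (hf : IsBoundedC1Near f t) : ∃ M, ∀ x, ‖f (x, t)‖ ≤ M :=
  (exists_eventually_forall_norm_le hf.isBigO_one).imp fun _ h => h.self_of_nhds

theorem exists_norm_fderiv_le (hf : IsBoundedC1Near f t) : ∃ M, ∀ x, ‖fderiv ℝ f (x, t)‖ ≤ M :=
  (exists_eventually_forall_norm_le hf.fderiv_isBigO_one).imp fun _ h => h.self_of_nhds

theorem exists_norm_fderiv_slice_le (hf : IsBoundedC1Near f t) :
    ∃ M, ∀ x, ‖fderiv ℝ (fun w => f (w, t)) x‖ ≤ M := by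
  refine hf.exists_norm_fderiv_le.imp fun M hM x => ?_
  rw [fderiv_comp_prodMk_left (hf.differentiable _)]
  grw [ContinuousLinearMap.opNorm_comp_le, ContinuousLinearMap.norm_inl_le_one, mul_one]
  exact hM x

theorem isSolenoidalWith_iSup {u : E × ℝ → E} (hu : IsBoundedC1Near u t)
    (hdiv : ∀ x, LinearMap.trace ℝ E (fderiv ℝ (fun y => u (y, t)) x) = 0) :
    IsSolenoidalWith (⨆ x, ‖fderiv ℝ (fun y => u (y, t)) x‖) fun y => u (y, t) := by
  obtain ⟨M, hM⟩ := hu.exists_norm_fderiv_slice_le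
  exact ⟨hu.contDiff.comp (by fun_prop), le_ciSup ⟨M, Set.forall_mem_range.2 hM⟩, hdiv⟩

theorem comp_clm {G : Type*} [NormedAddCommGroup G] [NormedSpace ℝ G] (hf : IsBoundedC1Near f t)
    (A : G →L[ℝ] E) : IsBoundedC1Near (fun p : G × ℝ => f (A p.1, p.2)) t := by
  have hA : Tendsto (fun p : G × ℝ => (A p.1, p.2)) (⊤ ×ˢ 𝓝 t) (⊤ ×ˢ 𝓝 t) :=
    tendsto_top.prodMap tendsto_id
  refine ⟨hf.contDiff.comp (by fun_prop), hf.isBigO_one.comp_tendsto hA, ?_⟩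
  refine IsBigO.congr_left ?_ fun p => (fderiv_comp_clm_prodMk A (hf.differentiable _)).symm
  exact (((ContinuousLinearMap.compL ℝ _ _ _).flip (A.prodMap (.id ℝ ℝ))).isBigO_comp _ _).trans
    (hf.fderiv_isBigO_one.comp_tendsto hA)

theorem mul {f g : E × ℝ → ℝ} (hf : IsBoundedC1Near f t) (hg : IsBoundedC1Near g t) :
    IsBoundedC1Near (fun p => f p * g p) t := by
  refine ⟨hf.contDiff.mul hg.contDiff, by simpa using hf.isBigO_one.mul hg.isBigO_one, ?_⟩
  have hsum := (hf.isBigO_one.smul hg.fderiv_isBigO_one).add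
    (hg.isBigO_one.smul hf.fderiv_isBigO_one)
  simp only [smul_eq_mul, mul_one] at hsum
  exact hsum.congr_left fun p =>
    (fderiv_fun_mul (hf.differentiable p) (hg.differentiable p)).symm

end IsBoundedC1Near

variable {u : E × ℝ → E} {f : E × ℝ → ℝ} {t L : ℝ}

theorem IsBoundedC1Near.continuous_materialDeriv (hf : IsBoundedC1Near f t)
    (hu : Continuous fun y => u (y, t)) : Continuous fun y => materialDeriv u f (y, t) := by
  simp_rw [materialDeriv_eq_fderiv (hf.differentiable _)]
  exact (hf.continuous_fderiv.comp (by fun_prop)).clm_apply (hu.prodMk continuous_const)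

theorem IsBoundedC1Near.exists_norm_materialDeriv_le (hf : IsBoundedC1Near f t)
    (hu : IsSolenoidalWith L fun y => u (y, t)) (x : E) :
    ∃ C, ∀ z, ‖materialDeriv u f (x - z, t)‖ ≤ C * (1 + ‖z‖) := by
  obtain ⟨M', hM'⟩ := hf.exists_norm_fderiv_le
  refine ⟨M' * (‖u (x, t)‖ + L + 1), fun z => ?_⟩
  have hM'₀ : 0 ≤ M' := (norm_nonneg _).trans (hM' x)
  have hL := hu.nonneg
  have huz : ‖u (x - z, t)‖ ≤ ‖u (x, t)‖ + L * ‖z‖ :=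
    calc ‖u (x - z, t)‖ ≤ ‖u (x, t)‖ + ‖u (x - z, t) - u (x, t)‖ := norm_le_norm_add_norm_sub' _ _
      _ ≤ ‖u (x, t)‖ + L * ‖z‖ := by
          gcongr
          simpa using hu.norm_sub_le (x - z) x
  rw [materialDeriv_eq_fderiv (hf.differentiable _)]
  calc ‖fderiv ℝ f (x - z, t) (u (x - z, t), 1)‖
      ≤ M' * (‖u (x - z, t)‖ + 1) := by
        refine (fderiv ℝ f (x - z, t)).le_of_opNorm_le_of_le (hM' _) ?_
        simp
    _ ≤ M' * ((‖u (x, t)‖ + L + 1) * (1 + ‖z‖)) := by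
        gcongr
        nlinarith [norm_nonneg z, norm_nonneg (u (x, t)),
          mul_nonneg (norm_nonneg (u (x, t))) (norm_nonneg z)]
    _ = M' * (‖u (x, t)‖ + L + 1) * (1 + ‖z‖) := by ring

end MaterialDerivative

section Tensor

variable {u : E × ℝ → E} {f₁ f₂ : E × ℝ → ℝ} {t : ℝ}

/-- The tensor product `f₁ ⊗ f₂` in the space variables, at each fixed time. -/
def tensor (f₁ f₂ : E × ℝ → ℝ) (p : (E × E) × ℝ) : ℝ :=
  f₁ (p.1.1, p.2) * f₂ (p.1.2, p.2)

/-- The velocity field `(x₁, x₂) ↦ (u(x₁), u(x₂))` of two particles transported by `u`, at each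
fixed time. -/
def doubleVelocity (u : E × ℝ → E) (p : (E × E) × ℝ) : E × E :=
  (u (p.1.1, p.2), u (p.1.2, p.2))

theorem IsSolenoidalWith.doubleVelocity [FiniteDimensional ℝ E] {L : ℝ}
    (hu : IsSolenoidalWith L fun y => u (y, t)) :
    IsSolenoidalWith L fun y => doubleVelocity u (y, t) :=
  hu.prodMap_self

theorem IsBoundedC1Near.tensor (hf₁ : IsBoundedC1Near f₁ t) (hf₂ : IsBoundedC1Near f₂ t) :
    IsBoundedC1Near (tensor f₁ f₂) t :=
  (hf₁.comp_clm (.fst ℝ E E)).mul (hf₂.comp_clm (.snd ℝ E E))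

theorem materialDeriv_tensor (hf₁ : Differentiable ℝ f₁) (hf₂ : Differentiable ℝ f₂)
    (p : (E × E) × ℝ) :
    materialDeriv (doubleVelocity u) (tensor f₁ f₂) p =
      tensor (materialDeriv u f₁) f₂ p + tensor f₁ (materialDeriv u f₂) p := by
  have h₁ := materialDeriv_comp_clm (u := doubleVelocity u) (w := u) (.fst ℝ E E) (p := p)
    (hf₁ _) rfl
  have h₂ := materialDeriv_comp_clm (u := doubleVelocity u) (w := u) (.snd ℝ E E) (p := p)
    (hf₂ _) rfl
  have hmul := materialDeriv_mul (u := doubleVelocity u) (p := p)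
    (f := fun q => f₁ (q.1.1, q.2)) (g := fun q => f₂ (q.1.2, q.2)) (by fun_prop) (by fun_prop)
  exact hmul.trans (congr($h₁ * f₂ (p.1.2, p.2) + f₁ (p.1.1, p.2) * $h₂))

theorem abs_tensor_le_iSup_mul_iSup (hf₁ : IsBoundedC1Near f₁ t) (hf₂ : IsBoundedC1Near f₂ t)
    (y : E × E) : |tensor f₁ f₂ (y, t)| ≤ (⨆ z, |f₁ (z, t)|) * ⨆ z, |f₂ (z, t)| := by
  obtain ⟨M₁, hM₁⟩ := hf₁.exists_norm_le
  obtain ⟨M₂, hM₂⟩ := hf₂.exists_norm_le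
  have h₁ : |f₁ (y.1, t)| ≤ ⨆ z, |f₁ (z, t)| := le_ciSup ⟨M₁, Set.forall_mem_range.2 hM₁⟩ y.1
  have h₂ : |f₂ (y.2, t)| ≤ ⨆ z, |f₂ (z, t)| := le_ciSup ⟨M₂, Set.forall_mem_range.2 hM₂⟩ y.2
  calc |tensor f₁ f₂ (y, t)| = |f₁ (y.1, t)| * |f₂ (y.2, t)| := abs_mul _ _
    _ ≤ (⨆ z, |f₁ (z, t)|) * ⨆ z, |f₂ (z, t)| := by gcongr; exact (abs_nonneg _).trans h₁

end Tensor

section Periodic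

theorem periodic_of_mem_span_int {A α : Type*} [AddCommGroup A] {f : A → α} {s : Set A}
    (hf : ∀ v ∈ s, Function.Periodic f v) {v : A} (hv : v ∈ Submodule.span ℤ s) :
    Function.Periodic f v := by
  induction hv using Submodule.span_induction with
  | mem v hv => exact hf v hv
  | zero => exact fun x => by rw [add_zero]
  | add v w _ _ hv hw => exact hv.add_period hw
  | smul n v _ hv => exact hv.zsmul n

variable {ι : Type*} [Finite ι] (b : Module.Basis ι ℝ E)

omit [NormedSpace ℝ F] in
theorem isBigO_one_of_periodic {X : Type*} [TopologicalSpace X] [WeaklyLocallyCompactSpace X]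
    {g : E × X → F} (hg : Continuous g)
    (hper : ∀ τ i, Function.Periodic (fun x => g (x, τ)) (b i)) (t : X) :
    g =O[⊤ ×ˢ 𝓝 t] fun _ => (1 : ℝ) := by
  have := Fintype.ofFinite ι
  have := b.finiteDimensional_of_finite
  obtain ⟨I, hI, hIt⟩ := exists_compact_mem_nhds t
  have hcompact := (isCompact_closedBall (0 : E) (∑ i, ‖b i‖)).prod hI
  obtain ⟨M, hM⟩ := hcompact.exists_bound_of_continuousOn hg.continuousOn
  refine .of_bound M ?_
  rw [top_prod, eventually_comap]
  filter_upwards [hIt] with τ hτ p hp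
  have hfract : g (ZSpan.fract b p.1, p.2) = g p := by
    have hfloor : Function.Periodic (fun x => g (x, p.2)) (ZSpan.floor b p.1) :=
      periodic_of_mem_span_int (Set.forall_mem_range.2 (hper p.2)) (ZSpan.floor b p.1).2
    exact hfloor.sub_eq p.1
  rw [← hfract, norm_one, mul_one]
  exact hM _ ⟨mem_closedBall_zero_iff.2 (ZSpan.norm_fract_le b p.1), hp ▸ hτ⟩

theorem IsBoundedC1Near.of_periodic {f : E × ℝ → F} (hf : ContDiff ℝ 1 f)
    (hper : ∀ τ i, Function.Periodic (fun x => f (x, τ)) (b i)) (t : ℝ) :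
    IsBoundedC1Near f t := by
  refine ⟨hf, isBigO_one_of_periodic b hf.continuous hper t,
    isBigO_one_of_periodic b (hf.continuous_fderiv one_ne_zero) (fun τ i x => ?_) t⟩
  have hshift : (fun p : E × ℝ => f (p + (b i, 0))) = f :=
    funext fun p => by simpa [Prod.add_def] using hper p.2 i p.1
  have hfderiv := fderiv_comp_add_right (𝕜 := ℝ) (f := f) (x := (x, τ)) (b i, 0)
  rw [hshift] at hfderiv
  simpa using hfderiv.symm

end Periodic

variable [MeasurableSpace E]

/-- `IsFirstMomentKernel K μ` says that `K` is a `C¹` kernel for which `K`, `∇K`, `|z| K` and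
`|z| ∇K` are all integrable. -/
structure IsFirstMomentKernel (K : E → ℝ) (μ : Measure E) : Prop where
  contDiff : ContDiff ℝ 1 K
  integrable : Integrable K μ
  integrable_norm_mul : Integrable (fun z => ‖z‖ * ‖K z‖) μ
  integrable_fderiv : Integrable (fderiv ℝ K) μ
  integrable_norm_mul_fderiv : Integrable (fun z => ‖z‖ * ‖fderiv ℝ K z‖) μ

namespace IsFirstMomentKernel

variable [BorelSpace E] {μ : Measure E}

theorem integrable_mul_of_norm_le {K h : E → ℝ} {C : ℝ} (hK : IsFirstMomentKernel K μ)
    (hh : Continuous h) (hC : ∀ z, ‖h z‖ ≤ C * (1 + ‖z‖)) :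
    Integrable (fun z => K z * h z) μ := by
  refine ((hK.integrable.norm.add hK.integrable_norm_mul).const_mul C).mono'
    (hK.contDiff.continuous.mul hh).aestronglyMeasurable (.of_forall fun z => ?_)
  calc ‖K z * h z‖ = ‖K z‖ * ‖h z‖ := norm_mul _ _
    _ ≤ ‖K z‖ * (C * (1 + ‖z‖)) := by gcongr; exact hC z
    _ = C * (‖K z‖ + ‖z‖ * ‖K z‖) := by ring

theorem integrable_fderiv_apply {f : E → ℝ} {V : E → E} {L : ℝ}
    (hf : IsFirstMomentKernel f μ) (hV : IsSolenoidalWith L V) (hV₀ : V 0 = 0) :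
    Integrable (fun z => fderiv ℝ f z (V z)) μ := by
  refine (hf.integrable_norm_mul_fderiv.const_mul L).mono'
    ((hf.contDiff.continuous_fderiv one_ne_zero).clm_apply
      hV.contDiff.continuous).aestronglyMeasurable (.of_forall fun z => ?_)
  calc ‖fderiv ℝ f z (V z)‖ ≤ ‖fderiv ℝ f z‖ * (L * ‖z‖) :=
        (fderiv ℝ f z).le_opNorm_of_le (hV.norm_le_of_zero hV₀ z)
    _ = L * (‖z‖ * ‖fderiv ℝ f z‖) := by ring

variable [FiniteDimensional ℝ E]

theorem mul_bounded {K G : E → ℝ} {M M' : ℝ}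
    (hK : IsFirstMomentKernel K μ) (hG : ContDiff ℝ 1 G) (hM : ∀ z, ‖G z‖ ≤ M)
    (hM' : ∀ z, ‖fderiv ℝ G z‖ ≤ M') : IsFirstMomentKernel (fun z => K z * G z) μ := by
  have hGmeas : AEStronglyMeasurable G μ := hG.continuous.aestronglyMeasurable
  have hKG : ContDiff ℝ 1 fun z => K z * G z := hK.contDiff.mul hG
  have hfderiv (z : E) :
      fderiv ℝ (fun z => K z * G z) z = K z • fderiv ℝ G z + G z • fderiv ℝ K z :=
    fderiv_fun_mul (hK.contDiff.differentiable one_ne_zero z) (hG.differentiable one_ne_zero z)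
  have hfderiv_le (z : E) :
      ‖fderiv ℝ (fun z => K z * G z) z‖ ≤ ‖K z‖ * M' + M * ‖fderiv ℝ K z‖ := by
    rw [hfderiv]
    refine norm_add_le_of_le ?_ ?_ <;> rw [norm_smul] <;> gcongr
    exacts [hM' z, hM z]
  have hKG' : Continuous (fderiv ℝ fun z => K z * G z) := hKG.continuous_fderiv one_ne_zero
  have hKGc := hKG.continuous
  refine ⟨hKG, hK.integrable.mul_bdd hGmeas (.of_forall hM),
    (hK.integrable_norm_mul.mul_const M).mono' (by fun_prop) (.of_forall fun z => ?_),
    ((hK.integrable.norm.mul_const M').add (hK.integrable_fderiv.norm.const_mul M)).mono'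
      (by fun_prop) (.of_forall hfderiv_le),
    ((hK.integrable_norm_mul.mul_const M').add
      (hK.integrable_norm_mul_fderiv.const_mul M)).mono' (by fun_prop) (.of_forall fun z => ?_)⟩
  · simp only [norm_mul, norm_norm, ← mul_assoc]
    gcongr
    exact hM z
  · calc ‖‖z‖ * ‖fderiv ℝ (fun z => K z * G z) z‖‖
        = ‖z‖ * ‖fderiv ℝ (fun z => K z * G z) z‖ := by simp
      _ ≤ ‖z‖ * (‖K z‖ * M' + M * ‖fderiv ℝ K z‖) := by gcongr; exact hfderiv_le z
      _ = ‖z‖ * ‖K z‖ * M' + M * (‖z‖ * ‖fderiv ℝ K z‖) := by ring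

end IsFirstMomentKernel

section DivergenceTheorem

variable [FiniteDimensional ℝ E] [BorelSpace E] {μ : Measure E} [μ.IsAddHaarMeasure]

theorem integral_fderiv_eq_zero {f : E → F} (hf : Differentiable ℝ f)
    (hfi : Integrable f μ) (hfi' : Integrable (fderiv ℝ f) μ) : ∫ x, fderiv ℝ f x ∂μ = 0 := by
  ext v
  have hparts := integral_smul_fderiv_eq_neg_fderiv_smul_of_integrable (𝕜 := ℝ) (μ := μ)
    (f := fun _ => (1 : ℝ)) (g := f) (v := v) (by simp)
    (by simpa using hfi'.apply_continuousLinearMap v) (by simpa using hfi)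
    (fun _ _ => differentiableAt_const _) fun x _ => hf x
  simpa [ContinuousLinearMap.integral_apply hfi'] using hparts

theorem integral_trace_fderiv_eq_zero {X : E → E} (hX : Differentiable ℝ X)
    (hXi : Integrable X μ) (hXi' : Integrable (fderiv ℝ X) μ) :
    ∫ x, LinearMap.trace ℝ E (fderiv ℝ X x) ∂μ = 0 := by
  let trace : (E →L[ℝ] E) →L[ℝ] ℝ :=
    (LinearMap.trace ℝ E ∘ₗ ContinuousLinearMap.coeLM ℝ).toContinuousLinearMap
  calc ∫ x, trace (fderiv ℝ X x) ∂μ = trace (∫ x, fderiv ℝ X x ∂μ) := trace.integral_comp_comm hXi'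
    _ = 0 := by rw [integral_fderiv_eq_zero hX hXi hXi', map_zero]

theorem IsFirstMomentKernel.integral_fderiv_apply_eq_zero {f : E → ℝ} {V : E → E} {L : ℝ}
    (hf : IsFirstMomentKernel f μ) (hV : IsSolenoidalWith L V) (hV₀ : V 0 = 0) :
    ∫ z, fderiv ℝ f z (V z) ∂μ = 0 := by
  have hf' : Differentiable ℝ f := hf.contDiff.differentiable one_ne_zero
  have hVz := hV.norm_le_of_zero hV₀
  have hfV : ContDiff ℝ 1 fun z => f z • V z := hf.contDiff.smul hV.contDiff
  rw [← integral_trace_fderiv_eq_zero (μ := μ) (hfV.differentiable one_ne_zero)]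
  · refine integral_congr_ae (.of_forall fun z => ?_)
    simp only [fderiv_fun_smul (hf' z) (hV.differentiable z),
      ContinuousLinearMap.toLinearMap_add, ContinuousLinearMap.toLinearMap_smul, map_add,
      map_smul, hV.trace_fderiv, smul_zero, zero_add]
    exact (LinearMap.trace_smulRight _ _).symm
  · refine (hf.integrable_norm_mul.const_mul L).mono' hfV.continuous.aestronglyMeasurable
      (.of_forall fun z => ?_)
    calc ‖f z • V z‖ = ‖f z‖ * ‖V z‖ := norm_smul _ _
      _ ≤ ‖f z‖ * (L * ‖z‖) := by gcongr; exact hVz z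
      _ = L * (‖z‖ * ‖f z‖) := by ring
  · refine ((hf.integrable.norm.mul_const L).add
      (hf.integrable_norm_mul_fderiv.const_mul L)).mono'
      (hfV.continuous_fderiv one_ne_zero).aestronglyMeasurable (.of_forall fun z => ?_)
    rw [fderiv_fun_smul (hf' z) (hV.differentiable z)]
    calc ‖f z • fderiv ℝ V z + (fderiv ℝ f z).smulRight (V z)‖
        ≤ ‖f z‖ * ‖fderiv ℝ V z‖ + ‖fderiv ℝ f z‖ * ‖V z‖ :=
          norm_add_le_of_le (norm_smul_le _ _)
            (ContinuousLinearMap.norm_smulRight_apply _ _).le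
      _ ≤ ‖f z‖ * L + ‖fderiv ℝ f z‖ * (L * ‖z‖) := by
          gcongr
          exacts [hV.norm_fderiv_le z, hVz z]
      _ = ‖f z‖ * L + L * (‖z‖ * ‖fderiv ℝ f z‖) := by ring

theorem IsFirstMomentKernel.integral_mul_fderiv_apply_eq_neg {K G : E → ℝ} {V : E → E}
    {L M M' : ℝ} (hK : IsFirstMomentKernel K μ) (hG : ContDiff ℝ 1 G) (hM : ∀ z, ‖G z‖ ≤ M)
    (hM' : ∀ z, ‖fderiv ℝ G z‖ ≤ M') (hV : IsSolenoidalWith L V) (hV₀ : V 0 = 0) :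
    ∫ z, K z * fderiv ℝ G z (V z) ∂μ = -∫ z, fderiv ℝ K z (V z) * G z ∂μ := by
  have hKG : IsFirstMomentKernel (fun z => K z * G z) μ := hK.mul_bounded hG hM hM'
  have hleibniz (z : E) : K z * fderiv ℝ G z (V z) =
      fderiv ℝ (fun z => K z * G z) z (V z) - fderiv ℝ K z (V z) * G z := by
    rw [fderiv_fun_mul (hK.contDiff.differentiable one_ne_zero z)
      (hG.differentiable one_ne_zero z)]
    simp only [add_apply, smul_apply, smul_eq_mul]
    ring
  simp_rw [hleibniz]
  rw [integral_sub (hKG.integrable_fderiv_apply hV hV₀)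
    ((hK.integrable_fderiv_apply hV hV₀).mul_bdd hG.continuous.aestronglyMeasurable
      (.of_forall hM)), hKG.integral_fderiv_apply_eq_zero hV hV₀, zero_sub]

theorem IsFirstMomentKernel.abs_integral_mul_fderiv_apply_le {K G : E → ℝ} {V : E → E}
    {L M M' : ℝ} (hK : IsFirstMomentKernel K μ) (hG : ContDiff ℝ 1 G) (hM : ∀ z, ‖G z‖ ≤ M)
    (hM' : ∀ z, ‖fderiv ℝ G z‖ ≤ M') (hV : IsSolenoidalWith L V) (hV₀ : V 0 = 0) :
    |∫ z, K z * fderiv ℝ G z (V z) ∂μ| ≤ (∫ z, ‖z‖ * ‖fderiv ℝ K z‖ ∂μ) * L * M := by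
  rw [hK.integral_mul_fderiv_apply_eq_neg hG hM hM' hV hV₀, abs_neg, mul_assoc,
    ← integral_mul_const, ← Real.norm_eq_abs]
  refine norm_integral_le_of_norm_le (hK.integrable_norm_mul_fderiv.mul_const _)
    (.of_forall fun z => ?_)
  calc ‖fderiv ℝ K z (V z) * G z‖ = ‖fderiv ℝ K z (V z)‖ * ‖G z‖ := norm_mul _ _
    _ ≤ ‖fderiv ℝ K z‖ * (L * ‖z‖) * M := by
        have hVz := (fderiv ℝ K z).le_opNorm_of_le (hV.norm_le_of_zero hV₀ z)
        exact mul_le_mul hVz (hM z) (norm_nonneg _) ((norm_nonneg _).trans hVz)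
    _ = ‖z‖ * ‖fderiv ℝ K z‖ * (L * M) := by ring

end DivergenceTheorem

section Convolution

/-- The convolution `K * f(·, t)` in the space variable at each fixed time. -/
def spaceConv (μ : Measure E) (K : E → ℝ) (f : E × ℝ → ℝ) (p : E × ℝ) : ℝ :=
  ∫ y, K (p.1 - y) * f (y, p.2) ∂μ

variable [BorelSpace E] {μ : Measure E} {K : E → ℝ} {u : E × ℝ → E}
  {f : E × ℝ → ℝ} {t L M : ℝ}

theorem IsFirstMomentKernel.integrable_mul_materialDeriv_comp_sub (hK : IsFirstMomentKernel K μ)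
    (hu : IsSolenoidalWith L fun y => u (y, t)) (hf : IsBoundedC1Near f t) (x : E) :
    Integrable (fun z => K z * materialDeriv u f (x - z, t)) μ := by
  obtain ⟨C, hC⟩ := hf.exists_norm_materialDeriv_le hu x
  exact hK.integrable_mul_of_norm_le
    ((hf.continuous_materialDeriv hu.contDiff.continuous).comp (by fun_prop)) hC

variable [FiniteDimensional ℝ E]

theorem IsFirstMomentKernel.integrable_smul_fderiv_comp_sub (hK : IsFirstMomentKernel K μ)
    (hf : IsBoundedC1Near f t) (x : E) :
    Integrable (fun z => K z • fderiv ℝ f (x - z, t)) μ := by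
  obtain ⟨M', hM'⟩ := hf.exists_norm_fderiv_le
  have hmeas : Continuous fun z => fderiv ℝ f (x - z, t) :=
    hf.continuous_fderiv.comp (by fun_prop)
  exact hK.integrable.smul_bdd M' hmeas.aestronglyMeasurable (.of_forall fun z => hM' (x - z))

theorem spaceConv_eq_integral_comp_sub (μ : Measure E) [μ.IsAddHaarMeasure] (K : E → ℝ)
    (f : E × ℝ → ℝ) (p : E × ℝ) :
    spaceConv μ K f p = ∫ z, K z * f (p.1 - z, p.2) ∂μ := by
  rw [spaceConv, ← integral_sub_left_eq_self _ μ p.1]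
  simp only [sub_sub_cancel]

variable [μ.IsAddHaarMeasure]

theorem IsFirstMomentKernel.hasFDerivAt_spaceConv (hK : IsFirstMomentKernel K μ)
    (hf : IsBoundedC1Near f t) (x : E) :
    HasFDerivAt (spaceConv μ K f) (∫ z, K z • fderiv ℝ f (x - z, t) ∂μ) (x, t) := by
  obtain ⟨M, hM⟩ := hf.exists_norm_le
  obtain ⟨M', hM'⟩ := exists_eventually_forall_norm_le hf.fderiv_isBigO_one
  have hKc := hK.contDiff.continuous
  have hfc := hf.contDiff.continuous
  have hmeas (p : E × ℝ) : AEStronglyMeasurable (fun z => K z * f (p.1 - z, p.2)) μ :=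
    Continuous.aestronglyMeasurable (by fun_prop)
  have hderiv (z : E) (p : E × ℝ) :
      HasFDerivAt (fun p : E × ℝ => f (p.1 - z, p.2)) (fderiv ℝ f (p.1 - z, p.2)) p := by
    have hshift := (hasFDerivAt_comp_sub (x := p) (z, (0 : ℝ))).2
      (hf.differentiable (p - (z, 0))).hasFDerivAt
    simpa only [Prod.sub_def, sub_zero] using hshift
  rw [funext (spaceConv_eq_integral_comp_sub μ K f)]
  have hnear : {p : E × ℝ | ∀ y, ‖fderiv ℝ f (y, p.2)‖ ≤ M'} ∈ 𝓝 (x, t) :=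
    (continuous_snd.tendsto (x, t)).eventually hM'
  refine hasFDerivAt_integral_of_dominated_of_fderiv_le hnear
    (F' := fun p z => K z • fderiv ℝ f (p.1 - z, p.2)) (bound := fun z => ‖K z‖ * M')
    (.of_forall hmeas) ?_ (hK.integrable_smul_fderiv_comp_sub hf x).aestronglyMeasurable ?_
    (hK.integrable.norm.mul_const M')
    (.of_forall fun z p _ => (hderiv z p).const_mul (K z))
  · exact hK.integrable.mul_bdd (c := M)
      (Continuous.aestronglyMeasurable (by fun_prop)) (.of_forall fun z => hM _)
  · refine .of_forall fun z p hp => ?_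
    rw [norm_smul]
    exact mul_le_mul_of_nonneg_left (hp _) (norm_nonneg _)

theorem IsFirstMomentKernel.materialDeriv_spaceConv_sub (hK : IsFirstMomentKernel K μ)
    (hu : IsSolenoidalWith L fun y => u (y, t)) (hf : IsBoundedC1Near f t) (x : E) :
    materialDeriv u (spaceConv μ K f) (x, t) - spaceConv μ K (materialDeriv u f) (x, t) =
      -∫ z, K z * fderiv ℝ (fun z => f (x - z, t)) z (u (x, t) - u (x - z, t)) ∂μ := by
  have hint := hK.integrable_smul_fderiv_comp_sub hf x
  have hconv := hK.hasFDerivAt_spaceConv hf x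
  rw [materialDeriv_eq_fderiv hconv.differentiableAt, hconv.fderiv,
    ContinuousLinearMap.integral_apply hint, spaceConv_eq_integral_comp_sub,
    ← integral_sub (hint.apply_continuousLinearMap _)
      (hK.integrable_mul_materialDeriv_comp_sub hu hf x), ← integral_neg]
  congr with z
  have hslice : fderiv ℝ (fun z => f (x - z, t)) z (u (x, t) - u (x - z, t)) =
      -fderiv ℝ f (x - z, t) (u (x, t) - u (x - z, t), 0) := by
    rw [fderiv_comp_const_sub (fun w => f (w, t)), fderiv_comp_prodMk_left (hf.differentiable _)]
    rfl
  have hvelocity : ((u (x, t) - u (x - z, t), 0) : E × ℝ) = (u (x, t), 1) - (u (x - z, t), 1) := by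
    simp
  rw [hslice, hvelocity, map_sub, materialDeriv_eq_fderiv (hf.differentiable _)]
  simp only [smul_apply, smul_eq_mul]
  ring

theorem IsFirstMomentKernel.abs_materialDeriv_spaceConv_sub_le (hK : IsFirstMomentKernel K μ)
    (hu : IsSolenoidalWith L fun y => u (y, t)) (hf : IsBoundedC1Near f t)
    (hM : ∀ y, |f (y, t)| ≤ M) (x : E) :
    |materialDeriv u (spaceConv μ K f) (x, t) - spaceConv μ K (materialDeriv u f) (x, t)| ≤
      (∫ z, ‖z‖ * ‖fderiv ℝ K z‖ ∂μ) * L * M := by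
  obtain ⟨M', hM'⟩ := hf.exists_norm_fderiv_slice_le
  have hfc := hf.contDiff
  have hslice (z : E) : ‖fderiv ℝ (fun z => f (x - z, t)) z‖ ≤ M' := by
    rw [fderiv_comp_const_sub (fun w => f (w, t)), norm_neg]
    exact hM' _
  rw [hK.materialDeriv_spaceConv_sub hu hf, abs_neg]
  exact hK.abs_integral_mul_fderiv_apply_le (by fun_prop) (fun z => hM (x - z)) hslice
    (hu.const_sub_comp_const_sub x) (by simp)

end Convolution

section Bilinear

/-- The bilinear convolution operator `S(f₁, f₂)` with kernel `K`, at each fixed time. -/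
def bilinConv (μ : Measure E) (K : E × E → ℝ) (f₁ f₂ : E × ℝ → ℝ) (p : E × ℝ) : ℝ :=
  ∫ y : E × E, K (p.1 - y.1, p.1 - y.2) * f₁ (y.1, p.2) * f₂ (y.2, p.2) ∂μ.prod μ

omit [NormedSpace ℝ E] in
theorem bilinConv_eq_spaceConv_tensor (μ : Measure E) (K : E × E → ℝ) (f₁ f₂ : E × ℝ → ℝ)
    (p : E × ℝ) :
    bilinConv μ K f₁ f₂ p = spaceConv (μ.prod μ) K (tensor f₁ f₂) ((p.1, p.1), p.2) := by
  simp only [bilinConv, spaceConv, tensor, Prod.sub_def, mul_assoc]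

variable [FiniteDimensional ℝ E] [BorelSpace E] {μ : Measure E} {K : E × E → ℝ}
  {u : E × ℝ → E} {f₁ f₂ : E × ℝ → ℝ} {t L : ℝ}

theorem IsFirstMomentKernel.integrable_mul_tensor_materialDeriv_left
    (hK : IsFirstMomentKernel K (μ.prod μ)) (hu : IsSolenoidalWith L fun y => u (y, t))
    (hf₁ : IsBoundedC1Near f₁ t) (hf₂ : IsBoundedC1Near f₂ t) (x : E) :
    Integrable (fun z => K z * tensor (materialDeriv u f₁) f₂ ((x, x) - z, t)) (μ.prod μ) := by
  obtain ⟨C, hC⟩ := hf₁.exists_norm_materialDeriv_le hu x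
  obtain ⟨M, hM⟩ := hf₂.exists_norm_le
  have hD := hf₁.continuous_materialDeriv hu.contDiff.continuous
  have hf₂c := hf₂.contDiff.continuous
  refine hK.integrable_mul_of_norm_le (C := C * M) ?_ fun z => ?_
  · exact (hD.comp (by fun_prop : Continuous fun z : E × E => x - z.1)).mul
      (hf₂c.comp (by fun_prop : Continuous fun z : E × E => (x - z.2, t)))
  · have hC₀ : 0 ≤ C := by simpa using (norm_nonneg _).trans (hC 0)
    calc ‖tensor (materialDeriv u f₁) f₂ ((x, x) - z, t)‖
        = ‖materialDeriv u f₁ (x - z.1, t)‖ * ‖f₂ (x - z.2, t)‖ := norm_mul _ _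
      _ ≤ C * (1 + ‖z.1‖) * M := by
          gcongr
          exacts [hC z.1, hM _]
      _ ≤ C * (1 + ‖z‖) * M := by
          have := (norm_nonneg _).trans (hM x)
          gcongr
          exact norm_fst_le z
      _ = C * M * (1 + ‖z‖) := by ring

variable [μ.IsAddHaarMeasure]

theorem IsFirstMomentKernel.spaceConv_materialDeriv_tensor_diag
    (hK : IsFirstMomentKernel K (μ.prod μ)) (hu : IsSolenoidalWith L fun y => u (y, t))
    (hf₁ : IsBoundedC1Near f₁ t) (hf₂ : IsBoundedC1Near f₂ t) (x : E) :
    spaceConv (μ.prod μ) K (materialDeriv (doubleVelocity u) (tensor f₁ f₂)) ((x, x), t) =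
      bilinConv μ K (materialDeriv u f₁) f₂ (x, t) +
        bilinConv μ K f₁ (materialDeriv u f₂) (x, t) := by
  rw [← sub_eq_iff_eq_add']
  simp only [bilinConv_eq_spaceConv_tensor, spaceConv_eq_integral_comp_sub]
  rw [← integral_sub
    (hK.integrable_mul_materialDeriv_comp_sub hu.doubleVelocity (hf₁.tensor hf₂) (x, x))
    (hK.integrable_mul_tensor_materialDeriv_left hu hf₁ hf₂ x)]
  congr with z
  rw [materialDeriv_tensor hf₁.differentiable hf₂.differentiable]
  ring

theorem material_derivative_bilinear_commutator_general {C : ℝ}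
    (hK : IsFirstMomentKernel K (μ.prod μ)) (hC : ∫ z, ‖z‖ * ‖fderiv ℝ K z‖ ∂μ.prod μ ≤ C)
    (hu : IsSolenoidalWith L fun y => u (y, t))
    (hf₁ : IsBoundedC1Near f₁ t) (hf₂ : IsBoundedC1Near f₂ t) (x : E) :
    |materialDeriv u (bilinConv μ K f₁ f₂) (x, t) - bilinConv μ K (materialDeriv u f₁) f₂ (x, t) -
        bilinConv μ K f₁ (materialDeriv u f₂) (x, t)| ≤
      C * L * (⨆ z, |f₁ (z, t)|) * ⨆ z, |f₂ (z, t)| := by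
  have hΦ : IsBoundedC1Near (tensor f₁ f₂) t := hf₁.tensor hf₂
  have hdiag : materialDeriv u (bilinConv μ K f₁ f₂) (x, t) =
      materialDeriv (doubleVelocity u) (spaceConv (μ.prod μ) K (tensor f₁ f₂)) ((x, x), t) := by
    rw [funext (bilinConv_eq_spaceConv_tensor μ K f₁ f₂)]
    exact materialDeriv_comp_clm (.prod (.id ℝ E) (.id ℝ E))
      (hK.hasFDerivAt_spaceConv hΦ (x, x)).differentiableAt rfl
  rw [hdiag, sub_sub, ← hK.spaceConv_materialDeriv_tensor_diag hu hf₁ hf₂]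
  have hL : 0 ≤ L := hu.nonneg
  calc _ ≤ (∫ z, ‖z‖ * ‖fderiv ℝ K z‖ ∂μ.prod μ) * L *
        ((⨆ z, |f₁ (z, t)|) * ⨆ z, |f₂ (z, t)|) :=
        hK.abs_materialDeriv_spaceConv_sub_le hu.doubleVelocity hΦ
          (abs_tensor_le_iSup_mul_iSup hf₁ hf₂) (x, x)
    _ ≤ C * L * ((⨆ z, |f₁ (z, t)|) * ⨆ z, |f₂ (z, t)|) := by
        have := (abs_nonneg _).trans (abs_tensor_le_iSup_mul_iSup hf₁ hf₂ (x, x))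
        gcongr
    _ = C * L * (⨆ z, |f₁ (z, t)|) * ⨆ z, |f₂ (z, t)| := (mul_assoc _ _ _).symm

end Bilinear

end Commutator

section Euclidean

theorem trace_fderiv_eq_sum {ι : Type*} [Fintype ι] [DecidableEq ι]
    {v : EuclideanSpace ℝ ι → EuclideanSpace ℝ ι} {x : EuclideanSpace ℝ ι}
    (hv : DifferentiableAt ℝ v x) :
    LinearMap.trace ℝ (EuclideanSpace ℝ ι) (fderiv ℝ v x) =
      ∑ j, fderiv ℝ (fun y => v y j) x (EuclideanSpace.single j 1) := by
  have hcoord (j : ι) : fderiv ℝ (fun y => v y j) x = EuclideanSpace.proj j ∘L fderiv ℝ v x :=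
    ((EuclideanSpace.proj (𝕜 := ℝ) j).hasFDerivAt.comp x hv.hasFDerivAt).fderiv
  rw [LinearMap.trace_eq_sum_inner _ (EuclideanSpace.basisFun ι ℝ)]
  simp [hcoord, EuclideanSpace.inner_single_left]

theorem sum_coordFn_smul_dir (z : E4) : ∑ ι, coordFn ι z • dir ι = z := by
  ext i <;> fin_cases i <;> simp [coordFn, dir]

theorem abs_coordFn_le_norm (ι : Fin 2 ⊕ Fin 2) (z : E4) : |coordFn ι z| ≤ ‖z‖ := by
  rcases ι with i | i
  · exact (PiLp.norm_apply_le z.1 i).trans (norm_fst_le z)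
  · exact (PiLp.norm_apply_le z.2 i).trans (norm_snd_le z)

theorem norm_dir (ι : Fin 2 ⊕ Fin 2) : ‖dir ι‖ = 1 := by
  rcases ι with i | i <;> simp [dir, Prod.norm_def]

theorem norm_le_sum_abs_coordFn (z : E4) : ‖z‖ ≤ ∑ ι, |coordFn ι z| := by
  calc ‖z‖ = ‖∑ ι, coordFn ι z • dir ι‖ := by rw [sum_coordFn_smul_dir]
    _ ≤ ∑ ι, ‖coordFn ι z • dir ι‖ := norm_sum_le _ _
    _ = ∑ ι, |coordFn ι z| := by simp only [norm_smul, norm_dir, mul_one, Real.norm_eq_abs]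

theorem opNorm_le_sum_abs_dir (A : E4 →L[ℝ] ℝ) : ‖A‖ ≤ ∑ κ, |A (dir κ)| := by
  refine A.opNorm_le_bound (by positivity) fun z => ?_
  calc ‖A z‖ = |∑ κ, coordFn κ z * A (dir κ)| := by
        conv_lhs => rw [← sum_coordFn_smul_dir z]
        simp only [map_sum, map_smul, smul_eq_mul, Real.norm_eq_abs]
    _ ≤ ∑ κ, |coordFn κ z * A (dir κ)| := Finset.abs_sum_le_sum_abs _ _
    _ ≤ ∑ κ, |A (dir κ)| * ‖z‖ := by
        gcongr with κ
        rw [abs_mul, mul_comm]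
        gcongr
        exact abs_coordFn_le_norm κ z
    _ = (∑ κ, |A (dir κ)|) * ‖z‖ := (Finset.sum_mul _ _ _).symm

theorem norm_mul_opNorm_le_sum (z : E4) (A : E4 →L[ℝ] ℝ) :
    ‖z‖ * ‖A‖ ≤ ∑ ι, ∑ κ, |coordFn ι z| * |A (dir κ)| := by
  rw [← Finset.sum_mul_sum]
  gcongr
  exacts [norm_le_sum_abs_coordFn z, opNorm_le_sum_abs_dir A]

variable {K : E4 → ℝ}

theorem isFirstMomentKernel_of_coord (hK : ContDiff ℝ 1 K) (hKi : Integrable K)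
    (hzK : ∀ ι, Integrable fun z => |coordFn ι z| * |K z|)
    (hdK : ∀ κ, Integrable fun z => |fderiv ℝ K z (dir κ)|)
    (hzdK : ∀ ι κ, Integrable fun z => |coordFn ι z| * |fderiv ℝ K z (dir κ)|) :
    IsFirstMomentKernel K volume := by
  have hKc := hK.continuous
  refine ⟨hK, hKi, (integrable_finsetSum Finset.univ fun ι _ => hzK ι).mono' (by fun_prop)
      (.of_forall fun z => ?_),
    (integrable_finsetSum Finset.univ fun κ _ => hdK κ).mono' (by fun_prop)
      (.of_forall fun z => opNorm_le_sum_abs_dir _),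
    (integrable_finsetSum Finset.univ fun ι _ =>
      integrable_finsetSum Finset.univ fun κ _ => hzdK ι κ).mono' (by fun_prop)
      (.of_forall fun z => ?_)⟩
  · rw [norm_mul, norm_norm, norm_norm, ← Finset.sum_mul, Real.norm_eq_abs]
    gcongr
    exact norm_le_sum_abs_coordFn z
  · rw [norm_mul, norm_norm, norm_norm]
    exact norm_mul_opNorm_le_sum z _

theorem integral_norm_mul_norm_fderiv_le {C : ℝ}
    (hzdK : ∀ ι κ, Integrable (fun z => |coordFn ι z| * |fderiv ℝ K z (dir κ)|) ∧
      ∫ z, |coordFn ι z| * |fderiv ℝ K z (dir κ)| ≤ C) :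
    ∫ z, ‖z‖ * ‖fderiv ℝ K z‖ ≤ 16 * C := by
  have hint (ι : Fin 2 ⊕ Fin 2) :
      Integrable fun z => ∑ κ, |coordFn ι z| * |fderiv ℝ K z (dir κ)| :=
    integrable_finsetSum _ fun κ _ => (hzdK ι κ).1
  calc ∫ z, ‖z‖ * ‖fderiv ℝ K z‖
      ≤ ∫ z, ∑ ι, ∑ κ, |coordFn ι z| * |fderiv ℝ K z (dir κ)| :=
        integral_mono_of_nonneg (.of_forall fun z => by positivity)
          (integrable_finsetSum _ fun ι _ => hint ι)
          (.of_forall fun z => norm_mul_opNorm_le_sum z _)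
    _ = ∑ ι, ∑ κ, ∫ z, |coordFn ι z| * |fderiv ℝ K z (dir κ)| := by
        rw [integral_finsetSum _ fun ι _ => hint ι]
        exact Finset.sum_congr rfl fun ι _ => integral_finsetSum _ fun κ _ => (hzdK ι κ).1
    _ ≤ ∑ _ι : Fin 2 ⊕ Fin 2, ∑ _κ : Fin 2 ⊕ Fin 2, C := by
        gcongr with ι _ κ
        exact (hzdK ι κ).2
    _ = 16 * C := by
        simp only [Finset.sum_const, Finset.card_univ, Fintype.card_sum, Fintype.card_fin,
          nsmul_eq_mul]
        push_cast
        ring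

/-- The basis `2π e₁, …, 2π eₙ` of the lattice `2πℤⁿ` of periods. -/
def periodBasis (ι : Type*) [Fintype ι] : Module.Basis ι ℝ (EuclideanSpace ℝ ι) :=
  (EuclideanSpace.basisFun ι ℝ).toBasis.isUnitSMul fun _ =>
    (isUnit_iff_ne_zero.2 Real.two_pi_pos.ne' : IsUnit (2 * π))

theorem periodBasis_apply {ι : Type*} [Fintype ι] [DecidableEq ι] (i : ι) :
    periodBasis ι i = (2 * π) • EuclideanSpace.single i 1 := by
  simp [periodBasis, Module.Basis.isUnitSMul_apply]

theorem isBoundedC1Near_of_two_pi_periodic {ι F : Type*} [Fintype ι] [DecidableEq ι]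
    [NormedAddCommGroup F] [NormedSpace ℝ F] {f : EuclideanSpace ℝ ι × ℝ → F}
    (hf : ContDiff ℝ 1 f)
    (hper : ∀ x t i, f (x + (2 * π) • EuclideanSpace.single i 1, t) = f (x, t)) (t : ℝ) :
    IsBoundedC1Near f t :=
  .of_periodic (periodBasis ι) hf (fun τ i x => by rw [periodBasis_apply]; exact hper x τ i) t

theorem isSolenoidalWith_of_sum_partial_eq_zero {ι : Type*} [Fintype ι] [DecidableEq ι]
    {u : EuclideanSpace ℝ ι × ℝ → EuclideanSpace ℝ ι} {t : ℝ} (hu : IsBoundedC1Near u t)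
    (hdiv : ∀ x, ∑ j, fderiv ℝ (fun y => u (y, t) j) x (EuclideanSpace.single j 1) = 0) :
    IsSolenoidalWith (⨆ x, ‖fderiv ℝ (fun y => u (y, t)) x‖) fun y => u (y, t) :=
  hu.isSolenoidalWith_iSup fun x =>
    (trace_fderiv_eq_sum (hu.differentiable.comp (by fun_prop) x)).trans (hdiv x)

end Euclidean

/-- Commutator estimate between the material derivative `D_t = ∂ₜ + u·∇` and a bilinear
convolution operator `S(f₁,f₂)(x) = ∫∫ K(x−y₁,x−y₂) f₁(y₁) f₂(y₂) dy₁ dy₂` whose kernel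
obeys `∫∫ |z^a ∂_z^b K| ≤ C₀ λ^{|b|−|a|}` for all multi-indices `0 ≤ |a|,|b| ≤ 1`:
`‖D_t S(f₁,f₂) − S(D_t f₁, f₂) − S(f₁, D_t f₂)‖_{C⁰}
  ≤ C C₀ ‖∇u(·,t)‖_{C⁰} ‖f₁(·,t)‖_{C⁰} ‖f₂(·,t)‖_{C⁰}`,
with `C` universal; in particular the bound is independent of `λ`. -/
theorem material_derivative_bilinear_commutator :
    ∃ C : ℝ, ∀ (lam C₀ : ℝ), 1 ≤ lam → 0 < C₀ →
      ∀ (K : E4 → ℝ) (u : E2 × ℝ → E2) (f₁ f₂ : E2 × ℝ → ℝ),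
      ContDiff ℝ 1 K →
      Integrable K →
      (∫ z, |K z|) ≤ C₀ →
      (∀ ι, Integrable (fun z => |coordFn ι z| * |K z|) ∧
        (∫ z, |coordFn ι z| * |K z|) ≤ C₀ * lam⁻¹) →
      (∀ κ, Integrable (fun z => |fderiv ℝ K z (dir κ)|) ∧
        (∫ z, |fderiv ℝ K z (dir κ)|) ≤ C₀ * lam) →
      (∀ ι κ, Integrable (fun z => |coordFn ι z| * |fderiv ℝ K z (dir κ)|) ∧
        (∫ z, |coordFn ι z| * |fderiv ℝ K z (dir κ)|) ≤ C₀) →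
      ContDiff ℝ (⊤ : ℕ∞) u →
      (∀ (x : E2) (t : ℝ) (i : Fin 2),
        u (x + (2 * π) • EuclideanSpace.single i 1, t) = u (x, t)) →
      (∀ (x : E2) (t : ℝ),
        ∑ j : Fin 2, fderiv ℝ (fun y => u (y, t) j) x (EuclideanSpace.single j 1) = 0) →
      ContDiff ℝ (⊤ : ℕ∞) f₁ →
      (∀ (x : E2) (t : ℝ) (i : Fin 2),
        f₁ (x + (2 * π) • EuclideanSpace.single i 1, t) = f₁ (x, t)) →
      ContDiff ℝ (⊤ : ℕ∞) f₂ →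
      (∀ (x : E2) (t : ℝ) (i : Fin 2),
        f₂ (x + (2 * π) • EuclideanSpace.single i 1, t) = f₂ (x, t)) →
      ∀ (t : ℝ) (x : E2),
        |(deriv (fun τ => ∫ y : E4, K (x - y.1, x - y.2) * f₁ (y.1, τ) * f₂ (y.2, τ)) t
            + fderiv ℝ (fun z => ∫ y : E4, K (z - y.1, z - y.2) * f₁ (y.1, t) * f₂ (y.2, t))
                x (u (x, t)))
          - (∫ y : E4, K (x - y.1, x - y.2) *
                (deriv (fun τ => f₁ (y.1, τ)) t
                  + fderiv ℝ (fun w => f₁ (w, t)) y.1 (u (y.1, t))) * f₂ (y.2, t))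
          - (∫ y : E4, K (x - y.1, x - y.2) * f₁ (y.1, t) *
                (deriv (fun τ => f₂ (y.2, τ)) t
                  + fderiv ℝ (fun w => f₂ (w, t)) y.2 (u (y.2, t))))|
          ≤ C * C₀ * (⨆ z : E2, ‖fderiv ℝ (fun w => u (w, t)) z‖)
              * (⨆ z : E2, |f₁ (z, t)|) * (⨆ z : E2, |f₂ (z, t)|) := by
  refine ⟨16, fun _ C₀ _ _ K u f₁ f₂ hK hKi _ hzK hdK hzdK hu hup hdiv hf₁ hp₁ hf₂ hp₂ t x => ?_⟩
  have hu' := isBoundedC1Near_of_two_pi_periodic (hu.of_le (by simp)) hup t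
  exact material_derivative_bilinear_commutator_general (μ := volume)
    (isFirstMomentKernel_of_coord hK hKi (fun ι => (hzK ι).1) (fun κ => (hdK κ).1)
      fun ι κ => (hzdK ι κ).1)
    (integral_norm_mul_norm_fderiv_le hzdK)
    (isSolenoidalWith_of_sum_partial_eq_zero hu' fun y => hdiv y t)
    (isBoundedC1Near_of_two_pi_periodic (hf₁.of_le (by simp)) hp₁ t)
    (isBoundedC1Near_of_two_pi_periodic (hf₂.of_le (by simp)) hp₂ t) x
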